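/- Let x, y, z, w satisfy Conditions BP1–BP5 for some d ∈ {n−2, n−1} with d ≥ 0. Then dim_ℂ (R/I²)_{d+2n} = 3 · dim_ℂ (R/I)_{d+n}. -/

import Mathlib

/-!
Write `J = ⟨x, y, z⟩ ⊆ I = ⟨x, y, z, w⟩`. The base locus being finite, some linear form
`ℓ = u - a s - b t` vanishes at none of its points (`exists_lin`). On the line `ℓ = 0` the forms
`x, y, z` have no common zero, since `w` vanishes wherever they do, so two combinations `f, g` of
them restrict to coprime binary forms (`isUnit_of_dvd_res`, `exists_coprime_combos`). Coprime
binary forms of degree `n` generate everything from degree `2n - 1` on, which gives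
`R_{k+1} ⊆ ℓ R_k + J` (`exists_decomp`). Hence the Hilbert function of `R/I` is non-increasing from
degree `d + n` on, thus constantly `D` there; applying the decomposition twice, the Hilbert
function of `R/JI` is non-increasing from degree `d + 2n` on.

The piece `(JI)_{e+2n}` is the image of `(I_{e+n})³` under `(A, B, C) ↦ A x + B y + C z`. The kernel
contains the Koszul syzygies, and a dimension count gives `dim (R/JI)_{e+2n} ≥ 3D` for all `e ≥ d`
(`three_mul_quotDim_le`). Conversely a syzygy with entries in `I` is Koszul (`isKoszul_of_mem`):
Koszul homology is supported on the base locus, and there the local complete intersection condition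
provides a syzygy with a unit entry, which kills the classes of syzygies with entries in `I`; so
such a class is killed by a power of `ℓ`, while `ℓ` is injective on the first Koszul homology.
Therefore `dim (R/JI)_{d+2n} ≤ 3D` (`quotDim_mul_le`), and the Hilbert function of `R/JI` is
constantly `3D` from degree `d + 2n` on. It follows that `ℓ` is injective on `R/JI` in these
degrees. As a power of `ℓ` carries `w` into `J`, also `w² R_d ⊆ JI`, so `I²` and `JI` agree in
degree `d + 2n`.
-/

open MvPolynomial

/-- `R3` is the polynomial ring `ℂ[s,t,u]`. -/
abbrev R3 : Type := MvPolynomial (Fin 3) ℂ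

/-- `quotDim I k` is the dimension of the degree-`k` graded piece of `R/I`. -/
noncomputable def quotDim (I : Ideal R3) (k : ℕ) : ℕ :=
  Module.finrank ℂ
    ((homogeneousSubmodule (Fin 3) ℂ k).map (Ideal.Quotient.mkₐ ℂ I).toLinearMap)

/-- The saturation of `J` with respect to the irrelevant ideal `⟨s,t,u⟩`:
`{f | ⟨s,t,u⟩^k · f ⊆ J for some k}`. -/
def satSet (J : Ideal R3) : Set R3 :=
  {f | ∃ k : ℕ, ∀ g ∈ (Ideal.span {X 0, X 1, X 2} : Ideal R3) ^ k, g * f ∈ J}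

/-- `I` is a local complete intersection: at each minimal prime `𝔭` over `I`, the
ideal generated by `I` in the localization `R_𝔭` is generated by two elements. -/
def IsLCI (I : Ideal R3) : Prop :=
  ∀ 𝔭 ∈ I.minimalPrimes, ∀ h𝔭 : 𝔭.IsPrime,
    letI := h𝔭
    ∃ a b : Localization.AtPrime 𝔭,
      Ideal.map (algebraMap R3 (Localization.AtPrime 𝔭)) I = Ideal.span {a, b}

/-- The set of common zeros of `ps` in `ℂ³ ∖ {0}` viewed in the projectivization of `ℂ³`. -/
def projVanish (ps : Set R3) : Set (Projectivization ℂ (Fin 3 → ℂ)) :=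
  {q | ∃ (v : Fin 3 → ℂ) (hv : v ≠ 0), q = Projectivization.mk ℂ v hv ∧
        ∀ p ∈ ps, MvPolynomial.eval v p = 0}

/-! ### Homogeneous components and dimensions of graded pieces -/

section Graded

variable {σ : Type*}

attribute [local instance] MvPolynomial.gradedAlgebra

lemma hc_mul_add {p f : MvPolynomial σ ℂ} {n : ℕ} (hf : f.IsHomogeneous n) (k : ℕ) :
    homogeneousComponent (k + n) (p * f) = homogeneousComponent k p * f := by
  have := DirectSum.coe_decompose_mul_add_of_right_mem (homogeneousSubmodule σ ℂ) (i := k)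
    (j := n) (a := p) (b := f) hf
  have e : ∀ (q : MvPolynomial σ ℂ) i, ((DirectSum.decompose (homogeneousSubmodule σ ℂ) q i :
      homogeneousSubmodule σ ℂ i) : MvPolynomial σ ℂ) = homogeneousComponent i q :=
    fun q i => decomposition.decompose'_apply q i
  rwa [e, e] at this

lemma hc_mul_lt {p f : MvPolynomial σ ℂ} {n : ℕ} (hf : f.IsHomogeneous n) {k : ℕ} (hk : k < n) :
    homogeneousComponent k (p * f) = 0 := by
  have := DirectSum.coe_decompose_mul_of_right_mem_of_not_le (homogeneousSubmodule σ ℂ) (i := n)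
    (n := k) (a := p) (b := f) hf (by omega)
  have e : ∀ (q : MvPolynomial σ ℂ) i, ((DirectSum.decompose (homogeneousSubmodule σ ℂ) q i :
      homogeneousSubmodule σ ℂ i) : MvPolynomial σ ℂ) = homogeneousComponent i q :=
    fun q i => decomposition.decompose'_apply q i
  rwa [e] at this

lemma hc_self {p : MvPolynomial σ ℂ} {n : ℕ} (hp : p.IsHomogeneous n) :
    homogeneousComponent n p = p := homogeneousComponent_eq_self hp

/-- The ideal `I` is homogeneous, in the sense that it contains the homogeneous components of its
elements. -/
def HomStable (I : Ideal (MvPolynomial σ ℂ)) : Prop :=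
  ∀ p ∈ I, ∀ k, homogeneousComponent k p ∈ I

lemma HomStable.of_isHomogeneous {I : Ideal (MvPolynomial σ ℂ)}
    (h : I.IsHomogeneous (homogeneousSubmodule σ ℂ)) : HomStable I :=
  fun _ hp k => homogeneousComponent_mem_of_mem h hp k

lemma homStable_span {s : Set (MvPolynomial σ ℂ)} (n : ℕ) (hs : ∀ p ∈ s, p.IsHomogeneous n) :
    HomStable (Ideal.span s) :=
  .of_isHomogeneous (Ideal.homogeneous_span _ _ fun p hp => ⟨n, hs p hp⟩)

lemma homStable_span_mul {s t : Set (MvPolynomial σ ℂ)} (n : ℕ) (hs : ∀ p ∈ s, p.IsHomogeneous n)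
    (ht : ∀ p ∈ t, p.IsHomogeneous n) :
    HomStable (Ideal.span s * Ideal.span t) :=
  .of_isHomogeneous ((Ideal.homogeneous_span _ _ fun p hp => ⟨n, hs p hp⟩).mul
    (Ideal.homogeneous_span _ _ fun p hp => ⟨n, ht p hp⟩))

end Graded

lemma finrank_homogeneous (m k : ℕ) :
    Module.finrank ℂ (homogeneousSubmodule (Fin m) ℂ k) = m.multichoose k := by
  classical
  have h1 : {d : Fin m →₀ ℕ | d.degree = k} =
      (((Finset.univ : Finset (Fin m)).finsuppAntidiag k : Finset (Fin m →₀ ℕ)) :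
        Set (Fin m →₀ ℕ)) := by
    ext d
    simp [Finset.mem_finsuppAntidiag, Finsupp.degree_eq_sum]
  rw [homogeneousSubmodule_eq_finsupp_supported, h1,
    (AddMonoidAlgebra.supportedEquivFinsupp _).finrank_eq]
  rw [Module.finrank_finsupp_self]
  simp [Finset.card_finsuppAntidiag_nat_eq_multichoose]

instance finite_homogeneous (m k : ℕ) : Module.Finite ℂ (homogeneousSubmodule (Fin m) ℂ k) :=
  Module.Finite.iff_fg.mpr (homogeneousSubmodule_fg _ _ k)

lemma finrank_two (k : ℕ) : Module.finrank ℂ (homogeneousSubmodule (Fin 2) ℂ k) = k + 1 := by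
  rw [finrank_homogeneous, Nat.multichoose_two]

lemma two_mul_finrank_three (k : ℕ) :
    2 * Module.finrank ℂ (homogeneousSubmodule (Fin 3) ℂ k) = (k + 1) * (k + 2) := by
  rw [finrank_homogeneous, Nat.multichoose_eq, show 3 + k - 1 = k + 2 by omega,
    Nat.choose_symm_add, Nat.choose_two_right, Nat.mul_div_cancel']
  · rw [show k + 2 - 1 = k + 1 by omega]; ring
  · exact (Nat.even_mul_pred_self (k+2)).two_dvd

/-- The degree-`k` piece of an ideal. -/
noncomputable def idealPiece (I : Ideal R3) (k : ℕ) : Submodule ℂ R3 :=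
  homogeneousSubmodule (Fin 3) ℂ k ⊓ I.restrictScalars ℂ

lemma mem_idealPiece {I : Ideal R3} {k : ℕ} {p : R3} :
    p ∈ idealPiece I k ↔ p.IsHomogeneous k ∧ p ∈ I := by
  simp [idealPiece]

instance finite_idealPiece (I : Ideal R3) (k : ℕ) : Module.Finite ℂ (idealPiece I k) :=
  Submodule.finiteDimensional_inf_left _ _

section LinAlg

variable {V W : Type*} [AddCommGroup V] [Module ℂ V] [AddCommGroup W] [Module ℂ W]

/-- Rank–nullity for the restriction of a linear map to a finite-dimensional subspace. -/
lemma finrank_map_add_inf_ker (f : V →ₗ[ℂ] W) (S : Submodule ℂ V) [Module.Finite ℂ S] :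
    Module.finrank ℂ (S.map f) + Module.finrank ℂ (S ⊓ LinearMap.ker f : Submodule ℂ V) =
      Module.finrank ℂ S := by
  have h := LinearMap.finrank_range_add_finrank_ker (f.domRestrict S)
  have h1 : LinearMap.range (f.domRestrict S) = S.map f := by
    rw [LinearMap.range_domRestrict]
  have h2 : (LinearMap.ker (f.domRestrict S)).map S.subtype = S ⊓ LinearMap.ker f := by
    rw [LinearMap.ker_domRestrict]
    exact Submodule.map_comap_subtype _ _
  rw [← h, ← h2, h1, LinearEquiv.finrank_eq (Submodule.equivMapOfInjective _
    S.injective_subtype _).symm]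

lemma injOn_of_finrank_map_eq (f : V →ₗ[ℂ] W) (S : Submodule ℂ V) [Module.Finite ℂ S]
    (h : Module.finrank ℂ (S.map f) = Module.finrank ℂ S) {v : V} (hv : v ∈ S) (h0 : f v = 0) :
    v = 0 := by
  have h1 := finrank_map_add_inf_ker f S
  have : Module.finrank ℂ (S ⊓ LinearMap.ker f : Submodule ℂ V) = 0 := by omega
  have : Module.Finite ℂ (S ⊓ LinearMap.ker f : Submodule ℂ V) :=
    Submodule.finiteDimensional_inf_left _ _
  have h2 := Submodule.finrank_eq_zero.mp ‹_ = 0›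
  have : v ∈ S ⊓ LinearMap.ker f := ⟨hv, h0⟩
  simpa [h2] using this

lemma finrank_submodule_prod (S : Submodule ℂ V) (T : Submodule ℂ W) [Module.Finite ℂ S]
    [Module.Finite ℂ T] :
    Module.finrank ℂ (S.prod T) = Module.finrank ℂ S + Module.finrank ℂ T := by
  have h : S.prod T = LinearMap.range (S.subtype.prodMap T.subtype) := by
    rw [LinearMap.range_prodMap, Submodule.range_subtype, Submodule.range_subtype]
  rw [h, LinearMap.finrank_range_of_inj, Module.finrank_prod]
  exact Function.Injective.prodMap S.injective_subtype T.injective_subtype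

end LinAlg

lemma quotDim_add (I : Ideal R3) (k : ℕ) :
    quotDim I k + Module.finrank ℂ (idealPiece I k) =
      Module.finrank ℂ (homogeneousSubmodule (Fin 3) ℂ k) := by
  have h : I.restrictScalars ℂ = LinearMap.ker (Ideal.Quotient.mkₐ ℂ I).toLinearMap := by
    ext p
    simp [Ideal.Quotient.eq_zero_iff_mem]
  rw [quotDim, idealPiece, h]
  exact finrank_map_add_inf_ker _ _

/-- If `ℓ` is a linear form with `R_{k+1} ⊆ ℓ R_k + I`, the graded pieces of `R/I` do not grow
from degree `k` to `k+1`; and if the dimensions agree, then `ℓ` is injective on `(R/I)_k`. -/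
lemma quotDim_succ {I : Ideal R3} {k : ℕ} {ℓ : R3} (hℓ : ℓ.IsHomogeneous 1)
    (h : ∀ p : R3, p.IsHomogeneous (k + 1) → ∃ r : R3, r.IsHomogeneous k ∧ p - ℓ * r ∈ I) :
    quotDim I (k + 1) ≤ quotDim I k ∧
      (quotDim I (k + 1) = quotDim I k → ∀ p : R3, p.IsHomogeneous k → ℓ * p ∈ I → p ∈ I) := by
  set π := (Ideal.Quotient.mkₐ ℂ I).toLinearMap
  set S := (homogeneousSubmodule (Fin 3) ℂ k).map π with hS
  let μ : (R3 ⧸ I) →ₗ[ℂ] (R3 ⧸ I) := LinearMap.mulLeft ℂ (Ideal.Quotient.mk I ℓ)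
  have hmap : (homogeneousSubmodule (Fin 3) ℂ (k + 1)).map π = S.map μ := by
    ext q
    constructor
    · rintro ⟨p, hp, rfl⟩
      obtain ⟨r, hr, hpr⟩ := h p hp
      refine ⟨π r, ⟨r, hr, rfl⟩, ?_⟩
      have := Ideal.Quotient.eq.mpr hpr
      simpa [μ, π] using this.symm
    · rintro ⟨_, ⟨r, hr, rfl⟩, rfl⟩
      refine ⟨ℓ * r, ?_, by simp [μ, π]⟩
      have := hℓ.mul hr
      rwa [add_comm] at this
  have e1 : quotDim I (k + 1) = Module.finrank ℂ (S.map μ) := by rw [← hmap]; rfl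
  have e2 : quotDim I k = Module.finrank ℂ S := rfl
  rw [e1, e2]
  refine ⟨Submodule.finrank_map_le _ _, fun heq p hp hlp => ?_⟩
  have := injOn_of_finrank_map_eq μ S heq (v := π p) ⟨p, hp, rfl⟩ (by
    have := Ideal.Quotient.eq_zero_iff_mem.mpr hlp
    simpa [μ, π] using this)
  exact Ideal.Quotient.eq_zero_iff_mem.mp this

/-! ### Coprime linear combinations -/

section Coprime

variable {A : Type*} [CommRing A] [IsDomain A] [UniqueFactorizationMonoid A] [Algebra ℂ A]

/-- If `v 0, v 1, v 2` have no common divisor, two suitable `ℂ`-linear combinations of them are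
already coprime: given a first nonzero combination, the second one only has to avoid the finitely
many proper subspaces of combinations divisible by one of its prime factors. -/
lemma exists_coprime_combos (v : Fin 3 → A) (hv : ∀ q, (∀ i, q ∣ v i) → IsUnit q) :
    ∃ c c' : Fin 3 → ℂ, (∑ i, c i • v i) ≠ 0 ∧ IsRelPrime (∑ i, c i • v i) (∑ i, c' i • v i) := by
  classical
  have h0 : ∃ i, v i ≠ 0 := by
    by_contra! h
    exact not_isUnit_zero (hv 0 fun i => by simp [h i])
  obtain ⟨i₀, hi₀⟩ := h0
  have hf : ∑ i, (Pi.single i₀ 1 : Fin 3 → ℂ) i • v i = v i₀ := by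
    simp [Pi.single_apply, ite_smul]
  let L : (Fin 3 → ℂ) →ₗ[ℂ] A := Fintype.linearCombination ℂ v
  have hL : ∀ c, L c = ∑ i, c i • v i := fun c => rfl
  let N : A → Submodule ℂ (Fin 3 → ℂ) := fun p => ((Ideal.span {p}).restrictScalars ℂ).comap L
  have hN : ∀ p c, c ∈ N p ↔ p ∣ ∑ i, c i • v i := fun p c => by
    simp [N, hL, Ideal.mem_span_singleton]
  let s : Finset (Submodule ℂ (Fin 3 → ℂ)) :=
    (UniqueFactorizationMonoid.factors (v i₀)).toFinset.image N
  have hs : ⊤ ∉ s := by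
    intro h
    obtain ⟨p, hp, hpt⟩ := Finset.mem_image.mp h
    have hpp := UniqueFactorizationMonoid.prime_of_factor p (Multiset.mem_toFinset.mp hp)
    refine hpp.not_isUnit (hv p fun i => ?_)
    have : (Pi.single i 1 : Fin 3 → ℂ) ∈ N p := by rw [hpt]; trivial
    rw [hN] at this
    simpa [Pi.single_apply, ite_smul] using this
  have hne := Subspace.biUnion_ne_univ_of_top_notMem hs
  obtain ⟨c', hc'⟩ := (Set.ne_univ_iff_exists_notMem _).mp hne
  refine ⟨Pi.single i₀ 1, c', by rwa [hf], ?_⟩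
  rw [hf]
  intro q hq1 hq2
  by_contra hu
  obtain ⟨p, hp, hpq⟩ := WfDvdMonoid.exists_irreducible_factor hu
    (fun h => hi₀ (by simpa [h] using hq1))
  obtain ⟨p', hp', hass⟩ :=
    UniqueFactorizationMonoid.exists_mem_factors_of_dvd hi₀ hp (hpq.trans hq1)
  apply hc'
  simp only [Set.mem_iUnion]
  exact ⟨N p', Finset.mem_image.mpr ⟨p', Multiset.mem_toFinset.mpr hp', rfl⟩,
    (hN _ _).mpr (hass.symm.dvd.trans (hpq.trans hq2))⟩

/-- Exactness of the Koszul complex at its second spot: a vector parallel to `v` is a multiple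
of `v`, as soon as two combinations of the entries of `v` are coprime. -/
lemma eq_mul_of_parallel {v P : Fin 3 → A} {c c' : Fin 3 → ℂ} (hf : (∑ i, c i • v i) ≠ 0)
    (hfg : IsRelPrime (∑ i, c i • v i) (∑ i, c' i • v i))
    (h : ∀ i j, P i * v j = P j * v i) : ∃ q, ∀ i, P i = q * v i := by
  have key : ∀ (e : Fin 3 → ℂ) j, (∑ i, e i • P i) * v j = P j * ∑ i, e i • v i := by
    intro e j
    rw [Finset.sum_mul, Finset.mul_sum]
    refine Finset.sum_congr rfl fun i _ => ?_
    rw [smul_mul_assoc, mul_smul_comm, h]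
  have h2 : (∑ i, c i • P i) * (∑ i, c' i • v i) = (∑ i, c' i • P i) * ∑ i, c i • v i := by
    rw [Finset.mul_sum, Finset.sum_mul]
    refine Finset.sum_congr rfl fun j _ => ?_
    rw [mul_smul_comm, key, smul_mul_assoc]
  obtain ⟨q, hq⟩ : (∑ i, c i • v i) ∣ ∑ i, c i • P i :=
    hfg.dvd_of_dvd_mul_right ⟨∑ i, c' i • P i, by rw [h2, mul_comm]⟩
  refine ⟨q, fun j => mul_right_cancel₀ hf ?_⟩
  rw [← key, hq]
  ring

end Coprime

/-- Two coprime binary forms of degree `n` generate all forms of degree at least `2n - 1`. -/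
lemma binary_mem_span {f g : MvPolynomial (Fin 2) ℂ} {n : ℕ} (hn : 1 ≤ n)
    (hf : f.IsHomogeneous n) (hg : g.IsHomogeneous n) (hf0 : f ≠ 0) (hfg : IsRelPrime f g)
    {k : ℕ} (hk : 2 * n ≤ k + 1) {p : MvPolynomial (Fin 2) ℂ} (hp : p.IsHomogeneous k) :
    p ∈ Ideal.span {f, g} := by
  obtain ⟨m, rfl⟩ : ∃ m, n = m + 1 := ⟨n - 1, by omega⟩
  let L : MvPolynomial (Fin 2) ℂ × MvPolynomial (Fin 2) ℂ →ₗ[ℂ] MvPolynomial (Fin 2) ℂ :=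
    (LinearMap.mulRight ℂ f).coprod (LinearMap.mulRight ℂ g)
  let T := (homogeneousSubmodule (Fin 2) ℂ m).prod (homogeneousSubmodule (Fin 2) ℂ m)
  have hT : Module.finrank ℂ T = 2 * m + 2 := by
    rw [finrank_submodule_prod, finrank_two]; ring
  have : Module.Finite ℂ T := Module.finite_of_finrank_pos (by omega)
  have hker : T ⊓ LinearMap.ker L = ⊥ := by
    rw [eq_bot_iff]
    rintro ⟨a, b⟩ ⟨⟨_, hb⟩, hab⟩
    replace hab : a * f + b * g = 0 := by simpa [L] using hab
    replace hb : b.IsHomogeneous m := hb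
    have hb0 : b = 0 := by
      obtain ⟨e, he⟩ : f ∣ b := hfg.dvd_of_dvd_mul_right ⟨-a, by linear_combination hab⟩
      by_contra hb0
      have he0 : e ≠ 0 := by rintro rfl; simp [he] at hb0
      have h1 := totalDegree_mul_of_isDomain hf0 he0
      rw [← he, hf.totalDegree hf0] at h1
      have := hb.totalDegree_le
      omega
    subst hb0
    have : a = 0 := by simpa [hf0] using hab
    simp [this]
  have hmap : T.map L = homogeneousSubmodule (Fin 2) ℂ (2 * m + 1) := by
    apply Submodule.eq_of_le_of_finrank_eq
    · rintro _ ⟨⟨a, b⟩, ⟨ha, hb⟩, rfl⟩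
      have h1 : (a * f).IsHomogeneous (m + (m + 1)) := IsHomogeneous.mul ha hf
      have h2 : (b * g).IsHomogeneous (m + (m + 1)) := IsHomogeneous.mul hb hg
      have := h1.add h2
      rw [show m + (m + 1) = 2 * m + 1 by ring] at this
      simpa [L] using this
    · have := finrank_map_add_inf_ker L T
      rw [hker, finrank_bot] at this
      rw [finrank_two]
      omega
  have hbase : ∀ q : MvPolynomial (Fin 2) ℂ, q.IsHomogeneous (2 * m + 1) →
      q ∈ Ideal.span {f, g} := by
    intro q hq
    have : q ∈ T.map L := by rw [hmap]; exact hq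
    obtain ⟨⟨a, b⟩, -, rfl⟩ := this
    exact Ideal.mem_span_pair.mpr ⟨a, b, by simp [L]⟩
  obtain ⟨j, rfl⟩ : ∃ j, k = (2 * m + 1) + j := ⟨k - (2 * m + 1), by omega⟩
  have hp' : p ∈ homogeneousSubmodule (Fin 2) ℂ (2 * m + 1) * homogeneousSubmodule (Fin 2) ℂ j := by
    rw [← homogeneousSubmodule_one_pow (R := ℂ) (σ := Fin 2) (n := 2 * m + 1),
      ← homogeneousSubmodule_one_pow (R := ℂ) (σ := Fin 2) (n := j), ← pow_add,
      homogeneousSubmodule_one_pow]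
    exact hp
  refine Submodule.mul_induction_on hp' (fun a ha b _ => ?_) (fun a b => Ideal.add_mem _)
  exact Ideal.mul_mem_right _ _ (hbase a ha)

/-! ### Restriction to a line of the projective plane -/

/-- The linear form `u - a s - b t`. -/
noncomputable def lin (a b : ℂ) : R3 := X 2 - (C a * X 0 + C b * X 1)

/-- Restriction of polynomials to the plane `u = a s + b t`. -/
noncomputable def res (a b : ℂ) : R3 →ₐ[ℂ] MvPolynomial (Fin 2) ℂ :=
  aeval ![X 0, X 1, C a * X 0 + C b * X 1]

/-- The inclusion `ℂ[s,t] ⊆ ℂ[s,t,u]`, a section of `res a b`. -/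
noncomputable def incl : MvPolynomial (Fin 2) ℂ →ₐ[ℂ] R3 := aeval ![X 0, X 1]

lemma lin_isHomogeneous (a b : ℂ) : (lin a b).IsHomogeneous 1 :=
  (isHomogeneous_X _ _).sub ((isHomogeneous_C_mul_X _ _).add (isHomogeneous_C_mul_X _ _))

lemma lin_ne_zero (a b : ℂ) : lin a b ≠ 0 := by
  intro h
  have := congrArg (eval ![0, 0, 1]) h
  simp [lin] at this

@[simp] lemma res_lin (a b : ℂ) : res a b (lin a b) = 0 := by
  simp [res, lin, algebraMap_eq]

@[simp] lemma res_incl (a b : ℂ) (q : MvPolynomial (Fin 2) ℂ) : res a b (incl q) = q := by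
  have : (res a b).comp incl = AlgHom.id ℂ _ := by
    ext i
    fin_cases i <;> simp [res, incl]
  exact DFunLike.congr_fun this q

lemma lin_dvd_sub (a b : ℂ) (p : R3) : lin a b ∣ p - incl (res a b p) := by
  rw [← Ideal.mem_span_singleton, ← Ideal.Quotient.eq]
  have : (Ideal.Quotient.mkₐ ℂ (Ideal.span {lin a b})) =
      ((Ideal.Quotient.mkₐ ℂ (Ideal.span {lin a b})).comp incl).comp (res a b) := by
    ext i
    fin_cases i
    · simp [res, incl]
    · simp [res, incl]
    · simp only [Ideal.Quotient.mkₐ_eq_mk, AlgHom.comp_apply]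
      rw [Ideal.Quotient.eq, Ideal.mem_span_singleton]
      simp [res, incl, lin, algebraMap_eq]
  exact DFunLike.congr_fun this p

lemma lin_dvd_iff (a b : ℂ) (p : R3) : lin a b ∣ p ↔ res a b p = 0 := by
  refine ⟨?_, fun h => by simpa [h] using lin_dvd_sub a b p⟩
  rintro ⟨q, rfl⟩
  simp

lemma res_isHomogeneous {a b : ℂ} {p : R3} {k : ℕ} (hp : p.IsHomogeneous k) :
    (res a b p).IsHomogeneous k := by
  have := hp.aeval (n := 1)
    (![X 0, X 1, C a * X 0 + C b * X 1] : Fin 3 → MvPolynomial (Fin 2) ℂ) (by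
    intro i
    fin_cases i
    · exact isHomogeneous_X _ _
    · exact isHomogeneous_X _ _
    · exact (isHomogeneous_C_mul_X _ _).add (isHomogeneous_C_mul_X _ _))
  rw [one_mul] at this
  exact this

lemma totalDegree_res_le (a b : ℂ) (p : R3) : (res a b p).totalDegree ≤ p.totalDegree := by
  conv_lhs => rw [← sum_homogeneousComponent p, map_sum]
  refine totalDegree_finsetSum_le fun i hi => ?_
  have := (res_isHomogeneous (a := a) (b := b)
    (homogeneousComponent_isHomogeneous i p)).totalDegree_le
  have := Finset.mem_range.mp hi
  omega

/-- Homogeneous polynomials whose restrictions to a line are coprime are themselves coprime. -/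
lemma isRelPrime_of_res {a b : ℂ} {f g : R3} {n : ℕ} (hf : f.IsHomogeneous n)
    (hf0 : res a b f ≠ 0) (hfg : IsRelPrime (res a b f) (res a b g)) : IsRelPrime f g := by
  rintro c ⟨f', rfl⟩ ⟨g', rfl⟩
  have hu : IsUnit (res a b c) := hfg ⟨res a b f', by simp⟩ ⟨res a b g', by simp⟩
  have hne : c * f' ≠ 0 := fun h => hf0 (by simp [h])
  have hc : c ≠ 0 := left_ne_zero_of_mul hne
  have hf' : f' ≠ 0 := right_ne_zero_of_mul hne
  have h1 := totalDegree_mul_of_isDomain hc hf'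
  rw [hf.totalDegree hne] at h1
  have h2 := (res_isHomogeneous (a := a) (b := b) hf).totalDegree hf0
  rw [map_mul] at h2 hf0
  rw [totalDegree_mul_of_isDomain (left_ne_zero_of_mul hf0) (right_ne_zero_of_mul hf0)] at h2
  have h3 : (res a b c).totalDegree = 0 := by
    rw [isUnit_iff_totalDegree_of_isReduced] at hu
    exact hu.2
  have h4 := totalDegree_res_le a b f'
  have h5 : c.totalDegree = 0 := by omega
  rw [totalDegree_eq_zero_iff_eq_C] at h5
  rw [h5] at hc ⊢
  exact (IsUnit.mk0 _ (by rintro h; simp [h] at hc)).map C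

/-- If `f, g` restrict to coprime forms of degree `n` on the line `ℓ = 0`, every form of degree
`k + 1 ≥ 2n - 1` is congruent modulo `ℓ` to a combination of `f, g` with homogeneous
coefficients. -/
lemma exists_decomp {a b : ℂ} {f g : R3} {n : ℕ} (hn : 1 ≤ n) (hf : f.IsHomogeneous n)
    (hg : g.IsHomogeneous n) (hf0 : res a b f ≠ 0) (hfg : IsRelPrime (res a b f) (res a b g))
    {k e : ℕ} (hk : 2 * n ≤ k + 2) (he : e + n = k + 1) {p : R3} (hp : p.IsHomogeneous (k + 1)) :
    ∃ α β r : R3, α.IsHomogeneous e ∧ β.IsHomogeneous e ∧ r.IsHomogeneous k ∧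
      p = α * f + β * g + lin a b * r := by
  have h := binary_mem_span hn (res_isHomogeneous hf) (res_isHomogeneous hg) hf0 hfg
    (k := k + 1) (by omega) (res_isHomogeneous (a := a) (b := b) hp)
  obtain ⟨α, β, hαβ⟩ := Ideal.mem_span_pair.mp h
  obtain ⟨r, hr⟩ : lin a b ∣ p - (incl α * f + incl β * g) := by
    rw [lin_dvd_iff]
    simp [hαβ]
  refine ⟨homogeneousComponent e (incl α), homogeneousComponent e (incl β),
    homogeneousComponent k r, homogeneousComponent_isHomogeneous _ _,
    homogeneousComponent_isHomogeneous _ _, homogeneousComponent_isHomogeneous _ _, ?_⟩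
  have hp' : p = incl α * f + incl β * g + r * lin a b := by linear_combination hr
  have := congrArg (homogeneousComponent (k + 1)) hp'
  rw [hc_self hp, map_add, map_add, hc_mul_add (lin_isHomogeneous a b), ← he, hc_mul_add hf,
    hc_mul_add hg] at this
  rw [this]
  ring

/-! ### Koszul syzygies -/

/-- `S` is a Koszul syzygy of `v`: it is the cross product `P × v` for some vector `P`. -/
def IsKoszul (v S : Fin 3 → R3) : Prop :=
  ∃ P : Fin 3 → R3, S 0 = P 1 * v 2 - P 2 * v 1 ∧ S 1 = P 2 * v 0 - P 0 * v 2 ∧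
    S 2 = P 0 * v 1 - P 1 * v 0

/-- The multiplication by `ℓ` is injective modulo the Koszul syzygies of `v`, if the restriction
of `v` to `ℓ = 0` has two coprime combinations of its entries. -/
lemma IsKoszul.of_lin_mul {a b : ℂ} {v S : Fin 3 → R3} {c c' : Fin 3 → ℂ}
    (hf0 : (∑ i, c i • res a b (v i)) ≠ 0)
    (hfg : IsRelPrime (∑ i, c i • res a b (v i)) (∑ i, c' i • res a b (v i)))
    (h : IsKoszul v (fun i => lin a b * S i)) : IsKoszul v S := by
  obtain ⟨P, h0, h1, h2⟩ := h
  dsimp only at h0 h1 h2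
  have r0 := congrArg (res a b) h0
  have r1 := congrArg (res a b) h1
  have r2 := congrArg (res a b) h2
  simp only [map_mul, map_sub, res_lin, zero_mul] at r0 r1 r2
  obtain ⟨q, hq⟩ := eq_mul_of_parallel (v := fun i => res a b (v i)) (P := fun i => res a b (P i))
    hf0 hfg (by
      intro i j
      fin_cases i <;> fin_cases j <;> dsimp only [Fin.zero_eta, Fin.mk_one, Fin.reduceFinMk]
      · linear_combination -r2
      · linear_combination r1
      · linear_combination r2
      · linear_combination -r0
      · linear_combination -r1
      · linear_combination r0)
  have hd : ∀ i, ∃ P', P i - incl q * v i = lin a b * P' := fun i => by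
    have : lin a b ∣ P i - incl q * v i := by
      rw [lin_dvd_iff]; simp [hq]
    exact this
  choose P' hP' using hd
  refine ⟨P', ?_, ?_, ?_⟩ <;> apply mul_left_cancel₀ (lin_ne_zero a b)
  · linear_combination h0 + v 2 * hP' 1 - v 1 * hP' 2
  · linear_combination h1 + v 0 * hP' 2 - v 2 * hP' 0
  · linear_combination h2 + v 1 * hP' 0 - v 0 * hP' 1

lemma IsKoszul.add {v S T : Fin 3 → R3} (hS : IsKoszul v S) (hT : IsKoszul v T) :
    IsKoszul v (fun i => S i + T i) := by
  obtain ⟨P, h0, h1, h2⟩ := hS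
  obtain ⟨Q, k0, k1, k2⟩ := hT
  refine ⟨fun i => P i + Q i, ?_, ?_, ?_⟩ <;> dsimp only
  · rw [h0, k0]; ring
  · rw [h1, k1]; ring
  · rw [h2, k2]; ring

lemma IsKoszul.mul {v S : Fin 3 → R3} (hS : IsKoszul v S) (r : R3) :
    IsKoszul v (fun i => r * S i) := by
  obtain ⟨P, h0, h1, h2⟩ := hS
  refine ⟨fun i => r * P i, ?_, ?_, ?_⟩ <;> dsimp only
  · rw [h0]; ring
  · rw [h1]; ring
  · rw [h2]; ring

/-- The ideal of multipliers carrying `S` into the Koszul syzygies of `v`. -/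
def koszulAnn (v S : Fin 3 → R3) : Ideal R3 where
  carrier := {r | IsKoszul v (fun i => r * S i)}
  zero_mem' := ⟨0, by simp, by simp, by simp⟩
  add_mem' {r s} h k := by
    simpa [add_mul] using IsKoszul.add (S := fun i => r * S i) (T := fun i => s * S i) h k
  smul_mem' r s h := by simpa [mul_assoc] using IsKoszul.mul (S := fun i => s * S i) h r

lemma mem_koszulAnn {v S : Fin 3 → R3} {r : R3} :
    r ∈ koszulAnn v S ↔ IsKoszul v (fun i => r * S i) := Iff.rfl

/-- The Koszul homology of `v` is killed by the entries of `v`. -/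
lemma span_le_koszulAnn {v S : Fin 3 → R3} (hS : v 0 * S 0 + v 1 * S 1 + v 2 * S 2 = 0) :
    Ideal.span {v 0, v 1, v 2} ≤ koszulAnn v S := by
  rw [Ideal.span_le]
  rintro r (rfl | rfl | rfl)
  · refine ⟨![0, -S 2, S 1], ?_, ?_, ?_⟩ <;> simp
    · linear_combination hS
    · ring
    · ring
  · refine ⟨![S 2, 0, -S 0], ?_, ?_, ?_⟩ <;> simp
    · ring
    · linear_combination hS
    · ring
  · refine ⟨![-S 1, S 0, 0], ?_, ?_, ?_⟩ <;> simp
    · ring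
    · ring
    · linear_combination hS

/-- If `S` is a syzygy of `v` with entries in `⟨v⟩` and `T` is any syzygy of `v`, the entries of
`T` carry `S` into the Koszul syzygies: `T i • S = S i • T + (multiple of a Koszul syzygy)`, since
`S × T` is a multiple of `v`. -/
lemma mul_isKoszul {v S T : Fin 3 → R3} {c c' : Fin 3 → ℂ}
    (hf0 : (∑ i, c i • v i) ≠ 0) (hfg : IsRelPrime (∑ i, c i • v i) (∑ i, c' i • v i))
    (hS : v 0 * S 0 + v 1 * S 1 + v 2 * S 2 = 0) (hT : v 0 * T 0 + v 1 * T 1 + v 2 * T 2 = 0)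
    (hSJ : ∀ i, S i ∈ Ideal.span {v 0, v 1, v 2}) (i : Fin 3) : T i ∈ koszulAnn v S := by
  obtain ⟨q, hq⟩ := eq_mul_of_parallel (v := v)
    (P := ![S 1 * T 2 - S 2 * T 1, S 2 * T 0 - S 0 * T 2, S 0 * T 1 - S 1 * T 0]) hf0 hfg (by
      intro i j
      fin_cases i <;> fin_cases j <;> simp
      · linear_combination T 2 * hS - S 2 * hT
      · linear_combination -T 1 * hS + S 1 * hT
      · linear_combination -T 2 * hS + S 2 * hT
      · linear_combination T 0 * hS - S 0 * hT
      · linear_combination T 1 * hS - S 1 * hT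
      · linear_combination -T 0 * hS + S 0 * hT)
  have q0 := hq 0
  have q1 := hq 1
  have q2 := hq 2
  simp at q0 q1 q2
  have hk : IsKoszul v (fun j => S i * T j) := span_le_koszulAnn hT (hSJ i)
  obtain ⟨P, h0, h1, h2⟩ := hk
  dsimp only at h0 h1 h2
  rw [mem_koszulAnn]
  fin_cases i <;> dsimp at h0 h1 h2 ⊢
  · refine ⟨![P 0 + q, P 1, P 2], ?_, ?_, ?_⟩ <;> simp
    · linear_combination h0
    · linear_combination h1 - q2
    · linear_combination h2 + q1
  · refine ⟨![P 0, P 1 + q, P 2], ?_, ?_, ?_⟩ <;> simp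
    · linear_combination h0 + q2
    · linear_combination h1
    · linear_combination h2 - q0
  · refine ⟨![P 0, P 1, P 2 + q], ?_, ?_, ?_⟩ <;> simp
    · linear_combination h0 - q1
    · linear_combination h1 + q0
    · linear_combination h2

/-! ### Points of the base locus and the local complete intersection condition -/

lemma eval_smul_of_isHomogeneous {p : R3} {n : ℕ} (hp : p.IsHomogeneous n) (c : ℂ)
    (v : Fin 3 → ℂ) : eval (c • v) p = c ^ n * eval v p := by
  rw [eval_eq, eval_eq, Finset.mul_sum]
  refine Finset.sum_congr rfl fun d hd => ?_
  have h : ∏ i ∈ d.support, c ^ d i = c ^ n := by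
    rw [Finset.prod_pow_eq_pow_sum]
    congr 1
    exact (hp.degree_eq_sum_deg_support hd).symm
  simp only [Pi.smul_apply, smul_eq_mul, mul_pow, Finset.prod_mul_distrib, h]
  ring

/-- Restriction of polynomials to the parametrized line `T ↦ T v`. -/
noncomputable def lineMap (v : Fin 3 → ℂ) : R3 →ₐ[ℂ] Polynomial ℂ :=
  aeval (fun i => Polynomial.C (v i) * Polynomial.X)

/-- The prime ideal of polynomials vanishing on the line `ℂ v`. -/
noncomputable def lineIdeal (v : Fin 3 → ℂ) : Ideal R3 := RingHom.ker (lineMap v)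

instance lineIdeal_isPrime (v : Fin 3 → ℂ) : (lineIdeal v).IsPrime := RingHom.ker_isPrime _

lemma eval_lineMap (v : Fin 3 → ℂ) (c : ℂ) (p : R3) :
    (lineMap v p).eval c = eval (c • v) p := by
  have : ((Polynomial.aeval c).comp (lineMap v)) = (aeval (c • v) : R3 →ₐ[ℂ] ℂ) := by
    ext i
    simp [lineMap]
    ring
  have := DFunLike.congr_fun this p
  simpa [MvPolynomial.aeval_eq_eval, Polynomial.aeval_def] using this

lemma mem_lineIdeal {v : Fin 3 → ℂ} {p : R3} : p ∈ lineIdeal v ↔ ∀ c : ℂ, eval (c • v) p = 0 := by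
  rw [lineIdeal, RingHom.mem_ker]
  constructor
  · intro h c
    rw [← eval_lineMap]
    have : lineMap v p = 0 := h
    simp [this]
  · intro h
    exact Polynomial.funext fun c => by simpa [eval_lineMap] using h c

lemma exists_smul_rep {v : Fin 3 → ℂ} (hv : v ≠ 0) :
    ∃ c : ℂ, v = c • (Projectivization.mk ℂ v hv).rep := by
  obtain ⟨a, ha⟩ := Projectivization.exists_smul_eq_mk_rep ℂ v hv
  refine ⟨((a⁻¹ : ℂˣ) : ℂ), ?_⟩
  rw [← ha, ← Units.smul_def, inv_smul_smul]

/-- A linear form `u - a s - b t` that vanishes at none of finitely many given points. -/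
lemma exists_lin {Z : Set (Projectivization ℂ (Fin 3 → ℂ))} (hZ : Z.Finite) :
    ∃ a b : ℂ, ∀ (v : Fin 3 → ℂ) (hv : v ≠ 0), Projectivization.mk ℂ v hv ∈ Z →
      eval v (lin a b) ≠ 0 := by
  let F : Projectivization ℂ (Fin 3 → ℂ) → MvPolynomial (Fin 2) ℂ := fun q =>
    C (q.rep 2) - (X 0 * C (q.rep 0) + X 1 * C (q.rep 1))
  have hF : ∀ q, F q ≠ 0 := by
    intro q h
    apply q.rep_nonzero
    have e0 := congrArg (eval ![0, 0]) h
    have e1 := congrArg (eval ![1, 0]) h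
    have e2 := congrArg (eval ![0, 1]) h
    simp [F] at e0 e1 e2
    ext i
    fin_cases i
    · simpa [e0] using e1
    · simpa [e0] using e2
    · exact e0
  have hprod : ∏ q ∈ hZ.toFinset, F q ≠ 0 := Finset.prod_ne_zero_iff.mpr fun q _ => hF q
  obtain ⟨t, ht⟩ : ∃ t, eval t (∏ q ∈ hZ.toFinset, F q) ≠ 0 := by
    by_contra! h
    exact hprod (MvPolynomial.funext fun t => by simpa using h t)
  refine ⟨t 0, t 1, fun v hv hvZ => ?_⟩
  rw [map_prod, Finset.prod_ne_zero_iff] at ht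
  have h1 := ht _ (hZ.mem_toFinset.mpr hvZ)
  obtain ⟨c, hc⟩ := exists_smul_rep hv
  have hc0 : c ≠ 0 := by rintro rfl; exact hv (by simpa using hc)
  rw [hc, eval_smul_of_isHomogeneous (lin_isHomogeneous _ _)]
  refine mul_ne_zero (by simpa using hc0) ?_
  simpa [F, lin] using h1

/-- Since the base locus is finite, the lines over its points are minimal primes of the ideal. -/
lemma lineIdeal_mem_minimalPrimes {ps : Set R3} {n : ℕ}
    (hps : ∀ p ∈ ps, p.IsHomogeneous n) (hfin : (projVanish ps).Finite) {v : Fin 3 → ℂ}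
    (hv : v ≠ 0) (hv0 : ∀ p ∈ ps, eval v p = 0) :
    lineIdeal v ∈ (Ideal.span ps).minimalPrimes := by
  refine ⟨⟨inferInstance, ?_⟩, ?_⟩
  · rw [Ideal.span_le]
    intro p hp
    refine mem_lineIdeal.mpr fun c => ?_
    rw [eval_smul_of_isHomogeneous (hps p hp), hv0 p hp, mul_zero]
  rintro 𝔮 ⟨h𝔮, hI𝔮⟩ hle
  have hprod : ∏ q ∈ hfin.toFinset, lineIdeal q.rep ≤ 𝔮 := by
    refine le_trans ?_ (h𝔮.isRadical.radical_le_iff.mpr hI𝔮)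
    rw [← vanishingIdeal_zeroLocus_eq_radical (K := ℂ)]
    intro p hp u hu
    have hp' : ∀ q ∈ projVanish ps, p ∈ lineIdeal q.rep := fun q hq =>
      (Ideal.prod_le_inf.trans (Finset.inf_le (hfin.mem_toFinset.mpr hq))) hp
    rw [aeval_eq_eval]
    by_cases hu0 : u = 0
    · have := mem_lineIdeal.mp (hp' (Projectivization.mk ℂ v hv) ⟨v, hv, rfl, hv0⟩) 0
      simpa [hu0] using this
    · obtain ⟨c, hc⟩ := exists_smul_rep hu0
      have := mem_lineIdeal.mp (hp' (Projectivization.mk ℂ u hu0) ⟨u, hu0, rfl, fun r hr => by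
        simpa [aeval_eq_eval] using hu r (Ideal.subset_span hr)⟩) c
      rw [← hc] at this
      exact this
  obtain ⟨q, -, hq⟩ := h𝔮.prod_le.mp hprod
  refine le_trans ?_ hq
  set r := q.rep
  obtain ⟨i, hi⟩ := Function.ne_iff.mp q.rep_nonzero
  change r i ≠ 0 at hi
  have hpar : ∀ j, r i * v j = r j * v i := by
    intro j
    have : (C (r i) * X j - C (r j) * X i : R3) ∈ lineIdeal v := hle (hq (mem_lineIdeal.mpr
      fun c => by simp; ring))
    have := mem_lineIdeal.mp this 1
    simpa [sub_eq_zero] using this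
  have hvi : v i ≠ 0 := by
    intro h
    apply hv
    ext j
    have := hpar j
    rw [h, mul_zero] at this
    simpa [hi] using this
  have hr : r = (r i / v i) • v := by
    ext j
    rw [Pi.smul_apply, smul_eq_mul, div_mul_eq_mul_div, eq_div_iff hvi, hpar]
  intro p hp
  rw [mem_lineIdeal] at hp ⊢
  intro c
  rw [hr, smul_smul]
  exact hp _

/-- In a local ring, three generators of a two-generated ideal satisfy a relation in which some
coefficient is a unit. -/
lemma exists_unit_relation {A : Type*} [CommRing A] [IsLocalRing A] (v : Fin 3 → A) (a b : A)
    (h : Ideal.span (Set.range v) = Ideal.span {a, b}) :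
    ∃ T : Fin 3 → A, ∑ j, T j * v j = 0 ∧ ∃ i, IsUnit (T i) := by
  have hP : ∀ i, ∃ p : Fin 2 → A, v i = p 0 * a + p 1 * b := by
    intro i
    have : v i ∈ Ideal.span {a, b} := h ▸ Ideal.subset_span ⟨i, rfl⟩
    obtain ⟨s, t, hst⟩ := Ideal.mem_span_pair.mp this
    exact ⟨![s, t], by simp [hst]⟩
  choose P hP using hP
  have ha : a ∈ Ideal.span (Set.range v) := h ▸ Ideal.subset_span (by simp)
  have hb : b ∈ Ideal.span (Set.range v) := h ▸ Ideal.subset_span (by simp)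
  obtain ⟨qa, hqa⟩ := Ideal.mem_span_range_iff_exists_fun.mp ha
  obtain ⟨qb, hqb⟩ := Ideal.mem_span_range_iff_exists_fun.mp hb
  let Pm : Matrix (Fin 3) (Fin 2) A := Matrix.of P
  let Qm : Matrix (Fin 2) (Fin 3) A := Matrix.of ![qa, qb]
  have hrel : ∀ i, ∑ j, (1 - Pm * Qm : Matrix (Fin 3) (Fin 3) A) i j * v j = 0 := by
    intro i
    have h1 : ∑ j, (Pm * Qm) i j * v j = v i := by
      simp only [Matrix.mul_apply, Fin.sum_univ_two, add_mul, Finset.sum_add_distrib, mul_assoc,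
        ← Finset.mul_sum]
      simp [Pm, Qm, hqa, hqb, hP i]
    simp only [Matrix.sub_apply, sub_mul, Finset.sum_sub_distrib, h1]
    simp [Matrix.one_apply]
  by_contra! hcon
  have hmax : ∀ i j, IsLocalRing.residue A ((1 - Pm * Qm : Matrix (Fin 3) (Fin 3) A) i j) = 0 := by
    intro i j
    rw [IsLocalRing.residue_eq_zero_iff, IsLocalRing.mem_maximalIdeal]
    exact hcon _ (hrel i) j
  -- Modulo the maximal ideal the identity matrix would factor through dimension two.
  have hone : Pm.map (IsLocalRing.residue A) * Qm.map (IsLocalRing.residue A) = 1 := by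
    rw [← Matrix.map_mul]
    ext i j
    have := hmax i j
    rw [Matrix.sub_apply, map_sub, sub_eq_zero] at this
    rw [Matrix.map_apply, ← this]
    by_cases hij : i = j <;> simp [Matrix.one_apply, hij]
  have hrank := (Matrix.rank_mul_le_left (Pm.map (IsLocalRing.residue A))
    (Qm.map (IsLocalRing.residue A))).trans (Matrix.rank_le_width _)
  rw [hone, Matrix.rank_one] at hrank
  simp at hrank

/-- Under the local complete intersection condition, at each point of the base locus some syzygy
of `v` does not vanish. -/
lemma exists_syzygy_ne_zero {v : Fin 3 → R3} {w : R3} {n : ℕ}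
    (hvh : ∀ i, (v i).IsHomogeneous n) (hw : w.IsHomogeneous n)
    (hfin : (projVanish {v 0, v 1, v 2, w}).Finite)
    (hlci : IsLCI (Ideal.span {v 0, v 1, v 2, w}))
    {N : ℕ} (hN : ∀ i, X i ^ N * w ∈ Ideal.span {v 0, v 1, v 2})
    {u : Fin 3 → ℂ} (hu : u ≠ 0) (hu0 : ∀ i, eval u (v i) = 0) :
    ∃ T : Fin 3 → R3, v 0 * T 0 + v 1 * T 1 + v 2 * T 2 = 0 ∧ ∃ i, eval u (T i) ≠ 0 := by
  obtain ⟨j, hj⟩ := Function.ne_iff.mp hu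
  change u j ≠ 0 at hj
  have hwu : eval u w = 0 := by
    have h1 : Ideal.span {v 0, v 1, v 2} ≤ RingHom.ker (eval u) := by
      rw [Ideal.span_le]
      rintro p (rfl | rfl | rfl) <;> exact hu0 _
    have := h1 (hN j)
    rw [RingHom.mem_ker] at this
    simpa [hj] using this
  have hmin := lineIdeal_mem_minimalPrimes (ps := {v 0, v 1, v 2, w}) (by
    rintro p (rfl | rfl | rfl | rfl)
    exacts [hvh 0, hvh 1, hvh 2, hw]) hfin hu (by
    rintro p (rfl | rfl | rfl | rfl)
    exacts [hu0 0, hu0 1, hu0 2, hwu])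
  obtain ⟨a, b, hab⟩ := hlci _ hmin inferInstance
  set 𝔭 := lineIdeal u with h𝔭
  let φ := algebraMap R3 (Localization.AtPrime 𝔭)
  have hXj : IsUnit (φ (X j ^ N)) := by
    rw [IsLocalization.AtPrime.isUnit_to_map_iff _ 𝔭]
    intro h
    have := mem_lineIdeal.mp h 1
    simp [hj] at this
  have hrange : Set.range (fun i => φ (v i)) = φ '' {v 0, v 1, v 2} := by
    ext q
    simp [Fin.exists_fin_succ, eq_comm]
  have hJ : Ideal.span (Set.range (fun i => φ (v i))) = Ideal.span {a, b} := by
    rw [← hab, Ideal.map_span, hrange]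
    apply le_antisymm
    · refine Ideal.span_mono (Set.image_mono ?_)
      rintro p (rfl | rfl | rfl) <;> simp
    · rw [Ideal.span_le]
      rintro _ ⟨p, hp, rfl⟩
      have hsub : ∀ p ∈ ({v 0, v 1, v 2} : Set R3), φ p ∈ Ideal.span (φ '' {v 0, v 1, v 2}) :=
        fun p hp => Ideal.subset_span ⟨p, hp, rfl⟩
      rcases hp with rfl | rfl | rfl | rfl
      · exact hsub _ (by simp)
      · exact hsub _ (by simp)
      · exact hsub _ (by simp)
      · have := Ideal.mem_map_of_mem φ (hN j)
        rw [Ideal.map_span, map_mul] at this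
        exact (Ideal.unit_mul_mem_iff_mem _ hXj).mp this
  obtain ⟨T, hT, i, hi⟩ := exists_unit_relation _ a b hJ
  obtain ⟨s, hs⟩ := IsLocalization.exist_integer_multiples_of_finite 𝔭.primeCompl T
  choose t ht using hs
  have hinj : Function.Injective φ := IsLocalization.injective _ 𝔭.primeCompl_le_nonZeroDivisors
  have hsyz : ∑ j, t j * v j = 0 := by
    apply hinj
    rw [map_sum, map_zero]
    have : ∀ j, φ (t j * v j) = φ s * (T j * φ (v j)) := fun j => by
      have h1 : φ (t j) = φ s * T j := by
        have := ht j
        rwa [Algebra.smul_def] at this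
      rw [map_mul, h1, mul_assoc]
    simp only [this, ← Finset.mul_sum, hT, mul_zero]
  have hti : t i ∉ 𝔭 := by
    have : IsUnit (φ (t i)) := by
      have h1 : φ (t i) = φ s * T i := by
        have := ht i
        rwa [Algebra.smul_def] at this
      rw [h1]
      exact (IsLocalization.map_units _ s).mul hi
    exact (IsLocalization.AtPrime.isUnit_to_map_iff _ 𝔭 _).mp this
  -- Some homogeneous component of the syzygy is nonzero at `u` itself.
  obtain ⟨k, hk⟩ : ∃ k, eval u (homogeneousComponent k (t i)) ≠ 0 := by
    by_contra! hcon
    apply hti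
    refine mem_lineIdeal.mpr fun c => ?_
    rw [← sum_homogeneousComponent (t i), map_sum]
    refine Finset.sum_eq_zero fun k _ => ?_
    rw [eval_smul_of_isHomogeneous (homogeneousComponent_isHomogeneous k _), hcon, mul_zero]
  refine ⟨fun i => homogeneousComponent k (t i), ?_, i, hk⟩
  have := congrArg (homogeneousComponent (k + n)) hsyz
  rw [map_sum, map_zero, Fin.sum_univ_three, hc_mul_add (hvh 0), hc_mul_add (hvh 1),
    hc_mul_add (hvh 2)] at this
  linear_combination this

/-- Syzygies `S` of `v` with entries in `I = ⟨v, w⟩` are Koszul. The annihilator of the class of `S`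
in Koszul homology contains `⟨v⟩` and, by `mul_isKoszul` and `exists_syzygy_ne_zero`, has no zero
apart from the origin, so it contains a power of `ℓ`; but `ℓ` acts injectively on the Koszul
homology. -/
lemma isKoszul_of_mem {v : Fin 3 → R3} {w : R3} {n : ℕ}
    (hvh : ∀ i, (v i).IsHomogeneous n) (hw : w.IsHomogeneous n)
    (hfin : (projVanish {v 0, v 1, v 2, w}).Finite)
    (hlci : IsLCI (Ideal.span {v 0, v 1, v 2, w}))
    {N : ℕ} (hN : ∀ i, X i ^ N * w ∈ Ideal.span {v 0, v 1, v 2})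
    {a b : ℂ} {c c' : Fin 3 → ℂ} (hf0 : (∑ i, c i • res a b (v i)) ≠ 0)
    (hfg : IsRelPrime (∑ i, c i • res a b (v i)) (∑ i, c' i • res a b (v i)))
    {S : Fin 3 → R3} (hS : v 0 * S 0 + v 1 * S 1 + v 2 * S 2 = 0)
    (hSI : ∀ i, S i ∈ Ideal.span {v 0, v 1, v 2, w}) : IsKoszul v S := by
  have hres : ∀ e : Fin 3 → ℂ, ∑ i, e i • res a b (v i) = res a b (∑ i, e i • v i) := by
    intro e; simp [map_sum]
  have hhom : (∑ i, c i • v i).IsHomogeneous n :=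
    IsHomogeneous.sum _ _ _ fun i _ => (homogeneousSubmodule (Fin 3) ℂ n).smul_mem _ (hvh i)
  have hg0 : (∑ i, c i • v i) ≠ 0 := fun h => hf0 (by rw [hres, h, map_zero])
  have hrel : IsRelPrime (∑ i, c i • v i) (∑ i, c' i • v i) := by
    refine isRelPrime_of_res (a := a) (b := b) hhom ?_ ?_
    · rwa [← hres]
    · rwa [← hres, ← hres]
  have hrad : lin a b ∈ (koszulAnn v S).radical := by
    rw [← vanishingIdeal_zeroLocus_eq_radical (K := ℂ)]
    intro u hu
    rw [aeval_eq_eval]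
    replace hu : ∀ p ∈ koszulAnn v S, eval u p = 0 := fun p hp => by
      simpa [aeval_eq_eval] using hu p hp
    by_cases hu0 : u = 0
    · simp [hu0, lin]
    exfalso
    have hJ := span_le_koszulAnn hS
    obtain ⟨T, hT, i, hi⟩ := exists_syzygy_ne_zero hvh hw hfin hlci hN hu0 (fun i =>
      hu _ (hJ (Ideal.subset_span (by fin_cases i <;> simp))))
    obtain ⟨j, hj⟩ := Function.ne_iff.mp hu0
    change u j ≠ 0 at hj
    have hmem : T i * X j ^ N ∈ koszulAnn v S := by
      have h1 : T i ∈ koszulAnn v (fun k => X j ^ N * S k) := by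
        refine mul_isKoszul hg0 hrel (by linear_combination X j ^ N * hS) hT (fun k => ?_) i
        have hle : Ideal.span {v 0, v 1, v 2, w} ≤
            (Ideal.span {v 0, v 1, v 2}).colon {(X j ^ N : R3)} := by
          rw [Ideal.span_le]
          intro p hp
          rw [SetLike.mem_coe, Submodule.mem_colon_singleton, smul_eq_mul]
          rcases hp with rfl | rfl | rfl | rfl
          · exact Ideal.mul_mem_right _ _ (Ideal.subset_span (by simp))
          · exact Ideal.mul_mem_right _ _ (Ideal.subset_span (by simp))
          · exact Ideal.mul_mem_right _ _ (Ideal.subset_span (by simp))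
          · rw [mul_comm]; exact hN j
        have := hle (hSI k)
        rwa [Submodule.mem_colon_singleton, smul_eq_mul, mul_comm] at this
      simpa only [mem_koszulAnn, mul_assoc] using h1
    have := hu _ hmem
    simp [hi, hj] at this
  obtain ⟨M, hM⟩ := hrad
  rw [mem_koszulAnn] at hM
  induction M with
  | zero => simpa using hM
  | succ M ih =>
    refine ih (IsKoszul.of_lin_mul hf0 hfg ?_)
    simpa only [pow_succ', mul_assoc] using hM

/-! ### A line missing the base locus -/

lemma eval_res (a b : ℂ) (t : Fin 2 → ℂ) (p : R3) :
    eval t (res a b p) = eval ![t 0, t 1, a * t 0 + b * t 1] p := by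
  have : ((aeval t : MvPolynomial (Fin 2) ℂ →ₐ[ℂ] ℂ).comp (res a b)) =
      (aeval ![t 0, t 1, a * t 0 + b * t 1] : R3 →ₐ[ℂ] ℂ) := by
    ext i
    fin_cases i <;> simp [res]
  have := DFunLike.congr_fun this p
  simpa [aeval_eq_eval] using this

/-- On a line missing the base locus, `x, y, z` have no common divisor. -/
lemma isUnit_of_dvd_res {v : Fin 3 → R3} {w : R3} {N : ℕ}
    (hN : ∀ i, X i ^ N * w ∈ Ideal.span {v 0, v 1, v 2}) {a b : ℂ}
    (hab : ∀ (u : Fin 3 → ℂ) (hu : u ≠ 0),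
      Projectivization.mk ℂ u hu ∈ projVanish {v 0, v 1, v 2, w} → eval u (lin a b) ≠ 0)
    (q : MvPolynomial (Fin 2) ℂ) (hq : ∀ i, q ∣ res a b (v i)) : IsUnit q := by
  have hzero : ∀ t : Fin 2 → ℂ, eval t q = 0 → t = 0 := by
    intro t ht
    by_contra ht0
    set u : Fin 3 → ℂ := ![t 0, t 1, a * t 0 + b * t 1] with hu
    have hu0 : u ≠ 0 := by
      intro h
      apply ht0
      ext i
      fin_cases i
      · simpa [hu] using congrFun h 0
      · simpa [hu] using congrFun h 1
    have hv : ∀ i, eval u (v i) = 0 := by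
      intro i
      obtain ⟨r, hr⟩ := hq i
      rw [hu, ← eval_res, hr, map_mul, ht, zero_mul]
    have hw : eval u w = 0 := by
      obtain ⟨j, hj⟩ := Function.ne_iff.mp hu0
      change u j ≠ 0 at hj
      have h1 : Ideal.span {v 0, v 1, v 2} ≤ RingHom.ker (eval u) := by
        rw [Ideal.span_le]
        rintro p (rfl | rfl | rfl) <;> exact hv _
      have := h1 (hN j)
      rw [RingHom.mem_ker] at this
      simpa [hj] using this
    refine hab u hu0 ⟨u, hu0, rfl, ?_⟩ ?_
    · rintro p (rfl | rfl | rfl | rfl)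
      exacts [hv 0, hv 1, hv 2, hw]
    · simp [hu, lin]
  have hX : ∀ i, ∃ M, q ∣ X i ^ M := by
    intro i
    have : (X i : MvPolynomial (Fin 2) ℂ) ∈ (Ideal.span {q}).radical := by
      rw [← vanishingIdeal_zeroLocus_eq_radical (K := ℂ)]
      intro t ht
      have h1 : eval t q = 0 := by
        simpa [aeval_eq_eval] using ht q (Ideal.subset_span rfl)
      simp [hzero t h1]
    obtain ⟨M, hM⟩ := this
    exact ⟨M, Ideal.mem_span_singleton.mp hM⟩
  obtain ⟨M, hM⟩ := hX 0
  obtain ⟨M', hXM⟩ := hX 1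
  have hrel : IsRelPrime (X 0 : MvPolynomial (Fin 2) ℂ) (X 1) := by
    rw [X_prime.irreducible.isRelPrime_iff_not_dvd, X_dvd_X]
    simp
  exact hrel.pow hM hXM

/-! ### The Koszul complex in a fixed degree -/

/-- Triples of elements of a subspace. -/
noncomputable def cube (S : Submodule ℂ R3) : Submodule ℂ (R3 × R3 × R3) := S.prod (S.prod S)

instance finite_cube (S : Submodule ℂ R3) [Module.Finite ℂ S] : Module.Finite ℂ (cube S) :=
  Module.Finite.iff_fg.mpr
    ((Module.Finite.iff_fg.mp ‹_›).prod
      ((Module.Finite.iff_fg.mp ‹_›).prod (Module.Finite.iff_fg.mp ‹_›)))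

lemma finrank_cube (S : Submodule ℂ R3) [Module.Finite ℂ S] :
    Module.finrank ℂ (cube S) = 3 * Module.finrank ℂ S := by
  have : Module.Finite ℂ (S.prod S) := Module.Finite.iff_fg.mpr
    ((Module.Finite.iff_fg.mp ‹_›).prod (Module.Finite.iff_fg.mp ‹_›))
  rw [cube, finrank_submodule_prod, finrank_submodule_prod]
  ring

lemma mem_cube {S : Submodule ℂ R3} {A B C : R3} :
    (A, B, C) ∈ cube S ↔ A ∈ S ∧ B ∈ S ∧ C ∈ S := Iff.rfl

/-- The map `(A, B, C) ↦ A x + B y + C z`. -/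
noncomputable def dotMap (v : Fin 3 → R3) : R3 × R3 × R3 →ₗ[ℂ] R3 :=
  (LinearMap.mulRight ℂ (v 0)).coprod
    ((LinearMap.mulRight ℂ (v 1)).coprod (LinearMap.mulRight ℂ (v 2)))

lemma dotMap_apply (v : Fin 3 → R3) (A B C : R3) :
    dotMap v (A, B, C) = A * v 0 + B * v 1 + C * v 2 := by
  simp [dotMap, add_assoc]

/-- The cross product `P ↦ P × v`. -/
noncomputable def crossMap (v : Fin 3 → R3) : R3 × R3 × R3 →ₗ[ℂ] R3 × R3 × R3 where
  toFun P := (P.2.1 * v 2 - P.2.2 * v 1, P.2.2 * v 0 - P.1 * v 2, P.1 * v 1 - P.2.1 * v 0)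
  map_add' P Q := by
    ext1
    · simp; ring
    · ext1 <;> simp <;> ring
  map_smul' c P := by
    simp [smul_sub]

lemma crossMap_apply (v : Fin 3 → R3) (P Q R : R3) :
    crossMap v (P, Q, R) = (Q * v 2 - R * v 1, R * v 0 - P * v 2, P * v 1 - Q * v 0) := rfl

/-- The scaling `h ↦ h v`. -/
noncomputable def scaleMap (v : Fin 3 → R3) : R3 →ₗ[ℂ] R3 × R3 × R3 :=
  (LinearMap.mulRight ℂ (v 0)).prod
    ((LinearMap.mulRight ℂ (v 1)).prod (LinearMap.mulRight ℂ (v 2)))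

/-- The kernel of the cross product with `v` in degree `e` is at most `R_{e-n}`; for
`e = n - 1, n - 2` the bound reads zero. -/
lemma finrank_ker_crossMap_le {v : Fin 3 → R3} {n : ℕ} (hvh : ∀ i, (v i).IsHomogeneous n)
    {c c' : Fin 3 → ℂ} (hf0 : (∑ i, c i • v i) ≠ 0)
    (hfg : IsRelPrime (∑ i, c i • v i) (∑ i, c' i • v i)) {e : ℕ} (he : n ≤ e + 2) :
    2 * (Module.finrank ℂ (cube (homogeneousSubmodule (Fin 3) ℂ e) ⊓
      LinearMap.ker (crossMap v) : Submodule ℂ (R3 × R3 × R3)) : ℤ) ≤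
      ((e : ℤ) + 1 - n) * (e + 2 - n) := by
  have key : ∀ P Q R : R3, (P, Q, R) ∈ cube (homogeneousSubmodule (Fin 3) ℂ e) ⊓
      LinearMap.ker (crossMap v) → ∃ q, P = q * v 0 ∧ Q = q * v 1 ∧ R = q * v 2 := by
    rintro P Q R ⟨-, hk⟩
    rw [SetLike.mem_coe, LinearMap.mem_ker, crossMap_apply] at hk
    simp only [Prod.mk_eq_zero] at hk
    obtain ⟨h0, h1, h2⟩ := hk
    obtain ⟨q, hq⟩ := eq_mul_of_parallel (v := v) (P := ![P, Q, R]) hf0 hfg (by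
      intro i j
      fin_cases i <;> fin_cases j <;> simp
      · linear_combination h2
      · linear_combination -h1
      · linear_combination -h2
      · linear_combination h0
      · linear_combination h1
      · linear_combination -h0)
    exact ⟨q, hq 0, hq 1, hq 2⟩
  rcases lt_or_ge e n with hen | hen
  · have hbot : cube (homogeneousSubmodule (Fin 3) ℂ e) ⊓ LinearMap.ker (crossMap v) = ⊥ := by
      rw [eq_bot_iff]
      rintro ⟨P, Q, R⟩ hPQR
      obtain ⟨q, h0, h1, h2⟩ := key P Q R hPQR
      obtain ⟨hP, hQ, hR⟩ := mem_cube.mp hPQR.1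
      have hz : ∀ (p : R3) i, p ∈ homogeneousSubmodule (Fin 3) ℂ e → p = q * v i → p = 0 := by
        intro p i hp hpq
        rw [← hc_self hp, hpq, hc_mul_lt (hvh i) hen]
      simp [hz P 0 hP h0, hz Q 1 hQ h1, hz R 2 hR h2]
    rw [hbot, finrank_bot]
    obtain rfl | rfl : n = e + 1 ∨ n = e + 2 := by omega
    · simp
    · push_cast; simp
  · obtain ⟨m, rfl⟩ : ∃ m, e = m + n := ⟨e - n, by omega⟩
    have hle : cube (homogeneousSubmodule (Fin 3) ℂ (m + n)) ⊓ LinearMap.ker (crossMap v) ≤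
        (homogeneousSubmodule (Fin 3) ℂ m).map (scaleMap v) := by
      rintro ⟨P, Q, R⟩ hPQR
      obtain ⟨q, h0, h1, h2⟩ := key P Q R hPQR
      obtain ⟨hP, hQ, hR⟩ := mem_cube.mp hPQR.1
      refine ⟨homogeneousComponent m q, homogeneousComponent_isHomogeneous _ _, ?_⟩
      have hz : ∀ (p : R3) i, p ∈ homogeneousSubmodule (Fin 3) ℂ (m + n) → p = q * v i →
          homogeneousComponent m q * v i = p := by
        intro p i hp hpq
        rw [← hc_mul_add (hvh i), ← hpq, hc_self hp]
      simp [scaleMap, hz P 0 hP h0, hz Q 1 hQ h1, hz R 2 hR h2]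
    have h1 := (Submodule.finrank_mono hle).trans (Submodule.finrank_map_le _ _)
    have h2 := two_mul_finrank_three m
    zify at h1 h2
    push_cast
    nlinarith

lemma exists_of_mem_mul {v : Fin 3 → R3} {I : Ideal R3} {p : R3}
    (hp : p ∈ Ideal.span {v 0, v 1, v 2} * I) :
    ∃ A ∈ I, ∃ B ∈ I, ∃ C ∈ I, p = A * v 0 + B * v 1 + C * v 2 := by
  rw [Ideal.span_insert, Ideal.span_insert, Ideal.sup_mul, Ideal.sup_mul] at hp
  obtain ⟨p0, h0, p', hp', rfl⟩ := Submodule.mem_sup.mp hp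
  obtain ⟨p1, h1, p2, h2, rfl⟩ := Submodule.mem_sup.mp hp'
  obtain ⟨A, hA, rfl⟩ := Ideal.mem_span_singleton_mul.mp h0
  obtain ⟨B, hB, rfl⟩ := Ideal.mem_span_singleton_mul.mp h1
  obtain ⟨C, hC, rfl⟩ := Ideal.mem_span_singleton_mul.mp h2
  exact ⟨A, hA, B, hB, C, hC, by ring⟩

/-- Degree pieces of `⟨x, y, z⟩ I` come from the corresponding pieces of `I`. -/
lemma map_dotMap {v : Fin 3 → R3} {n : ℕ} (hvh : ∀ i, (v i).IsHomogeneous n) {I : Ideal R3}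
    (hI : HomStable I) (k : ℕ) :
    (cube (idealPiece I k)).map (dotMap v) =
      idealPiece (Ideal.span {v 0, v 1, v 2} * I) (k + n) := by
  apply le_antisymm
  · rintro _ ⟨⟨A, B, C⟩, hABC, rfl⟩
    obtain ⟨hA, hB, hC⟩ := mem_cube.mp hABC
    rw [mem_idealPiece] at hA hB hC
    rw [dotMap_apply, mem_idealPiece]
    refine ⟨((hA.1.mul (hvh 0)).add (hB.1.mul (hvh 1))).add (hC.1.mul (hvh 2)), ?_⟩
    rw [mul_comm A, mul_comm B, mul_comm C]
    refine add_mem (add_mem ?_ ?_) ?_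
    · exact Ideal.mul_mem_mul (Ideal.subset_span (by simp)) hA.2
    · exact Ideal.mul_mem_mul (Ideal.subset_span (by simp)) hB.2
    · exact Ideal.mul_mem_mul (Ideal.subset_span (by simp)) hC.2
  · intro p hp
    rw [mem_idealPiece] at hp
    obtain ⟨A, hA, B, hB, C, hC, hABC⟩ := exists_of_mem_mul hp.2
    refine ⟨(homogeneousComponent k A, homogeneousComponent k B, homogeneousComponent k C),
      mem_cube.mpr ⟨mem_idealPiece.mpr ⟨homogeneousComponent_isHomogeneous _ _, hI A hA k⟩,
        mem_idealPiece.mpr ⟨homogeneousComponent_isHomogeneous _ _, hI B hB k⟩,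
        mem_idealPiece.mpr ⟨homogeneousComponent_isHomogeneous _ _, hI C hC k⟩⟩, ?_⟩
    rw [dotMap_apply, ← hc_mul_add (hvh 0), ← hc_mul_add (hvh 1), ← hc_mul_add (hvh 2), ← map_add,
      ← map_add, ← hABC, hc_self hp.1]

/-- Lower bound `dim (R/JI)_{e+2n} ≥ 3 dim (R/I)_{e+n}` with `J = ⟨x, y, z⟩`, because the Koszul
syzygies of `x, y, z` have entries in `J ⊆ I`. The dimensions of the graded pieces of `R` cancel
as the third difference of a quadratic polynomial. -/
lemma three_mul_quotDim_le {v : Fin 3 → R3} {n : ℕ} (hvh : ∀ i, (v i).IsHomogeneous n)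
    {I : Ideal R3} (hI : HomStable I) (hJI : Ideal.span {v 0, v 1, v 2} ≤ I)
    {c c' : Fin 3 → ℂ} (hf0 : (∑ i, c i • v i) ≠ 0)
    (hfg : IsRelPrime (∑ i, c i • v i) (∑ i, c' i • v i)) {e : ℕ} (he : n ≤ e + 2) :
    3 * quotDim I (e + n) ≤ quotDim (Ideal.span {v 0, v 1, v 2} * I) (e + n + n) := by
  have hle : (cube (homogeneousSubmodule (Fin 3) ℂ e)).map (crossMap v) ≤
      cube (idealPiece I (e + n)) ⊓ LinearMap.ker (dotMap v) := by
    rintro _ ⟨⟨P, Q, R⟩, hPQR, rfl⟩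
    obtain ⟨hP, hQ, hR⟩ := mem_cube.mp hPQR
    have hmem : ∀ (p : R3) i, p ∈ homogeneousSubmodule (Fin 3) ℂ e →
        p * v i ∈ idealPiece I (e + n) := fun p i hp => mem_idealPiece.mpr
      ⟨IsHomogeneous.mul hp (hvh i),
        I.mul_mem_left _ (hJI (Ideal.subset_span (by fin_cases i <;> simp)))⟩
    rw [crossMap_apply]
    refine ⟨mem_cube.mpr ⟨sub_mem (hmem _ _ hQ) (hmem _ _ hR),
      sub_mem (hmem _ _ hR) (hmem _ _ hP), sub_mem (hmem _ _ hP) (hmem _ _ hQ)⟩, ?_⟩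
    rw [SetLike.mem_coe, LinearMap.mem_ker, dotMap_apply]
    ring
  have : Module.Finite ℂ (cube (idealPiece I (e + n)) ⊓ LinearMap.ker (dotMap v) :
      Submodule ℂ (R3 × R3 × R3)) := Submodule.finiteDimensional_inf_left _ _
  have h1 := Submodule.finrank_mono hle
  have h2 := finrank_map_add_inf_ker (crossMap v) (cube (homogeneousSubmodule (Fin 3) ℂ e))
  have h3 := finrank_map_add_inf_ker (dotMap v) (cube (idealPiece I (e + n)))
  rw [map_dotMap hvh hI] at h3
  rw [finrank_cube] at h2 h3
  have h4 := finrank_ker_crossMap_le hvh hf0 hfg he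
  have h5 := quotDim_add I (e + n)
  have h6 := quotDim_add (Ideal.span {v 0, v 1, v 2} * I) (e + n + n)
  have h7 := two_mul_finrank_three e
  have h8 := two_mul_finrank_three (e + n)
  have h9 := two_mul_finrank_three (e + n + n)
  zify at *
  linarith

/-- Upper bound `dim (R/JI)_{d+2n} ≤ 3 dim (R/I)_{d+n}` when all syzygies of `x, y, z` with entries
in `I` are Koszul. The binomial coefficients cancel because `binomial(d-n+2, 2) = 0` for
`d = n - 1, n - 2`. -/
lemma quotDim_mul_le {v : Fin 3 → R3} {n : ℕ} (hvh : ∀ i, (v i).IsHomogeneous n)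
    {I : Ideal R3} (hI : HomStable I)
    (hkos : ∀ S : Fin 3 → R3, v 0 * S 0 + v 1 * S 1 + v 2 * S 2 = 0 → (∀ i, S i ∈ I) →
      IsKoszul v S) {d : ℕ} (hd : d + 1 = n ∨ d + 2 = n) :
    quotDim (Ideal.span {v 0, v 1, v 2} * I) (d + n + n) ≤ 3 * quotDim I (d + n) := by
  have hle : cube (idealPiece I (d + n)) ⊓ LinearMap.ker (dotMap v) ≤
      (cube (homogeneousSubmodule (Fin 3) ℂ d)).map (crossMap v) := by
    rintro ⟨A, B, C⟩ ⟨hABC, hk⟩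
    obtain ⟨hA, hB, hC⟩ := mem_cube.mp hABC
    rw [mem_idealPiece] at hA hB hC
    rw [SetLike.mem_coe, LinearMap.mem_ker, dotMap_apply] at hk
    obtain ⟨P, h0, h1, h2⟩ := hkos ![A, B, C] (by simp; linear_combination hk) (by
      intro i
      fin_cases i
      exacts [hA.2, hB.2, hC.2])
    simp at h0 h1 h2
    have hc : ∀ i, homogeneousComponent d (P i) ∈ homogeneousSubmodule (Fin 3) ℂ d :=
      fun i => homogeneousComponent_isHomogeneous _ _
    refine ⟨(homogeneousComponent d (P 0), homogeneousComponent d (P 1),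
      homogeneousComponent d (P 2)), mem_cube.mpr ⟨hc 0, hc 1, hc 2⟩, ?_⟩
    have hcomp : ∀ (p : R3) i j k l, p.IsHomogeneous (d + n) → p = P i * v j - P k * v l →
        homogeneousComponent d (P i) * v j - homogeneousComponent d (P k) * v l = p := by
      intro p i j k l hp hpe
      rw [← hc_mul_add (hvh j), ← hc_mul_add (hvh l), ← map_sub, ← hpe, hc_self hp]
    rw [crossMap_apply, hcomp A _ _ _ _ hA.1 h0, hcomp B _ _ _ _ hB.1 h1, hcomp C _ _ _ _ hC.1 h2]
  have h1 := (Submodule.finrank_mono hle).trans (Submodule.finrank_map_le _ _)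
  have h3 := finrank_map_add_inf_ker (dotMap v) (cube (idealPiece I (d + n)))
  rw [map_dotMap hvh hI] at h3
  rw [finrank_cube] at h1 h3
  have h5 := quotDim_add I (d + n)
  have h6 := quotDim_add (Ideal.span {v 0, v 1, v 2} * I) (d + n + n)
  have h7 := two_mul_finrank_three d
  have h8 := two_mul_finrank_three (d + n)
  have h9 := two_mul_finrank_three (d + n + n)
  rcases hd with rfl | rfl
  · zify at *
    linarith
  · zify at *
    linarith

/-! ### The Hilbert function of `I²` in degree `d + 2n` -/

lemma mem_sq_span {x y z w p : R3} (hp : p ∈ Ideal.span {x, y, z, w} ^ 2) :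
    ∃ q ∈ Ideal.span {x, y, z} * Ideal.span {x, y, z, w}, ∃ r, p = q + r * w * w := by
  have hI : Ideal.span {x, y, z, w} = Ideal.span {x, y, z} ⊔ Ideal.span {w} := by
    rw [← Ideal.span_union]
    congr 1
    ext
    simp only [Set.mem_insert_iff, Set.mem_singleton_iff, Set.mem_union, or_assoc]
  have hle : Ideal.span {x, y, z, w} ^ 2 ≤
      Ideal.span {x, y, z} * Ideal.span {x, y, z, w} ⊔ Ideal.span {w * w} := by
    rw [sq]
    conv_lhs => rw [hI, Ideal.sup_mul, Ideal.mul_sup (Ideal.span {w}), ← hI,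
      Ideal.span_singleton_mul_span_singleton]
    refine sup_le le_sup_left (sup_le (le_sup_of_le_left ?_) le_sup_right)
    rw [mul_comm]
    exact Ideal.mul_mono_right (Ideal.span_mono (by simp))
  obtain ⟨q, hq, s, hs, rfl⟩ := Submodule.mem_sup.mp (hle hp)
  obtain ⟨r, rfl⟩ := Ideal.mem_span_singleton'.mp hs
  exact ⟨q, hq, r, by ring⟩

/-- With `v = (x, y, z)`, the pieces `(I²)_{d+2n}` and `(⟨x, y, z⟩ I)_{d+2n}` agree and have
codimension `3D`. -/
lemma quotDim_sq {v : Fin 3 → R3} {w : R3} {n d : ℕ} (hdn : d + 1 = n ∨ d + 2 = n)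
    (hvh : ∀ i, (v i).IsHomogeneous n) (hw : w.IsHomogeneous n)
    (hfin : (projVanish {v 0, v 1, v 2, w}).Finite)
    (hlci : IsLCI (Ideal.span {v 0, v 1, v 2, w})) {D N : ℕ}
    (hD : ∀ k, N ≤ k → quotDim (Ideal.span {v 0, v 1, v 2, w}) k = D)
    (hd : quotDim (Ideal.span {v 0, v 1, v 2, w}) (d + n) = D)
    (hsat : w ∈ satSet (Ideal.span {v 0, v 1, v 2})) :
    quotDim (Ideal.span {v 0, v 1, v 2, w} ^ 2) (d + n + n) = 3 * D := by
  have hn : 1 ≤ n := by omega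
  set J := Ideal.span {v 0, v 1, v 2} with hJ
  set I := Ideal.span {v 0, v 1, v 2, w} with hI
  have hJI : J ≤ I := Ideal.span_mono (by
    rintro p (rfl | rfl | rfl) <;> simp)
  have hgen3 : ∀ p ∈ ({v 0, v 1, v 2} : Set R3), p.IsHomogeneous n := by
    rintro p (rfl | rfl | rfl)
    exacts [hvh 0, hvh 1, hvh 2]
  have hgen4 : ∀ p ∈ ({v 0, v 1, v 2, w} : Set R3), p.IsHomogeneous n := by
    rintro p (rfl | rfl | rfl | rfl)
    exacts [hvh 0, hvh 1, hvh 2, hw]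
  have hIst : HomStable I := homStable_span n hgen4
  have hJIst : HomStable (J * I) := homStable_span_mul n hgen3 hgen4
  obtain ⟨M, hM⟩ := hsat
  have hXM : ∀ i, X i ^ M * w ∈ J := fun i =>
    hM _ (Ideal.pow_mem_pow (Ideal.subset_span (by fin_cases i <;> simp)) M)
  obtain ⟨a, b, hab⟩ := exists_lin hfin
  set ℓ := lin a b with hℓ
  have hℓM : ℓ ^ M * w ∈ J := by
    refine hM _ (Ideal.pow_mem_pow ?_ M)
    rw [hℓ, lin]
    exact sub_mem (Ideal.subset_span (by simp)) (add_mem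
      (Ideal.mul_mem_left _ _ (Ideal.subset_span (by simp)))
      (Ideal.mul_mem_left _ _ (Ideal.subset_span (by simp))))
  obtain ⟨c, c', hf0, hfg⟩ := exists_coprime_combos (fun i => res a b (v i))
    (isUnit_of_dvd_res hXM hab)
  have hres : ∀ e : Fin 3 → ℂ, ∑ i, e i • res a b (v i) = res a b (∑ i, e i • v i) := by
    intro e; simp [map_sum]
  have hhom : ∀ e : Fin 3 → ℂ, (∑ i, e i • v i).IsHomogeneous n := fun e =>
    IsHomogeneous.sum _ _ _ fun i _ => (homogeneousSubmodule (Fin 3) ℂ n).smul_mem _ (hvh i)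
  have hmemJ : ∀ e : Fin 3 → ℂ, (∑ i, e i • v i) ∈ J := fun e =>
    Ideal.sum_mem _ fun i _ => Submodule.smul_of_tower_mem _ _
      (Ideal.subset_span (by fin_cases i <;> simp))
  have hkos : ∀ S : Fin 3 → R3, v 0 * S 0 + v 1 * S 1 + v 2 * S 2 = 0 → (∀ i, S i ∈ I) →
      IsKoszul v S := fun S hS hSI => isKoszul_of_mem hvh hw hfin hlci hXM hf0 hfg hS hSI
  rw [hres] at hf0
  rw [hres, hres] at hfg
  have hrel := isRelPrime_of_res (hhom c) hf0 hfg
  have hf0' : ∑ i, c i • v i ≠ 0 := fun h => hf0 (by rw [h, map_zero])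
  generalize hfdef : ∑ i, c i • v i = f at *
  generalize hgdef : ∑ i, c' i • v i = g at *
  have hfh : f.IsHomogeneous n := hfdef ▸ hhom c
  have hgh : g.IsHomogeneous n := hgdef ▸ hhom c'
  have hgJ : g ∈ J := hgdef ▸ hmemJ c'
  have hfJ : f ∈ J := hfdef ▸ hmemJ c
  -- The Hilbert function of `R/I` is constant from degree `d + n` on.
  have hsurj : ∀ k, d + n ≤ k → ∀ p : R3, p.IsHomogeneous (k + 1) →
      ∃ r : R3, r.IsHomogeneous k ∧ p - ℓ * r ∈ I := by
    intro k hk p hp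
    obtain ⟨α, β, r, -, -, hr, rfl⟩ := exists_decomp hn hfh hgh hf0 hfg (k := k)
      (e := k + 1 - n) (by omega) (by omega) hp
    refine ⟨r, hr, ?_⟩
    rw [← hℓ, add_sub_cancel_right]
    exact hJI (add_mem (J.mul_mem_left _ hfJ) (J.mul_mem_left _ hgJ))
  have hanti : ∀ k, d + n ≤ k → ∀ j, quotDim I (k + j) ≤ quotDim I k := by
    intro k hk j
    induction j with
    | zero => simp
    | succ j ih =>
      exact ((quotDim_succ (lin_isHomogeneous a b) (hsurj (k + j) (by omega))).1).trans ih
  have hconst : ∀ k, d + n ≤ k → quotDim I k = D := by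
    intro k hk
    have h1 := hanti (d + n) le_rfl (k - (d + n))
    rw [Nat.add_sub_cancel' hk, hd] at h1
    have h2 := hanti k hk N
    rw [hD (k + N) (by omega)] at h2
    exact le_antisymm h1 h2
  -- Likewise for `R/JI` from degree `d + 2n` on.
  have hsurj2 : ∀ k, d + n + n ≤ k → ∀ p : R3, p.IsHomogeneous (k + 1) →
      ∃ r : R3, r.IsHomogeneous k ∧ p - ℓ * r ∈ J * I := by
    intro k hk p hp
    obtain ⟨m, rfl⟩ : ∃ m, k = m + n := ⟨k - n, by omega⟩
    obtain ⟨α, β, r, hα, hβ, hr, rfl⟩ := exists_decomp hn hfh hgh hf0 hfg (k := m + n)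
      (e := m + 1) (by omega) (by omega) hp
    obtain ⟨α', hα', hαI⟩ := hsurj m (by omega) α hα
    obtain ⟨β', hβ', hβI⟩ := hsurj m (by omega) β hβ
    refine ⟨α' * f + β' * g + r, ((hα'.mul hfh).add (hβ'.mul hgh)).add hr, ?_⟩
    have : α * f + β * g + lin a b * r - ℓ * (α' * f + β' * g + r) =
        f * (α - ℓ * α') + g * (β - ℓ * β') := by rw [hℓ]; ring
    rw [this]
    exact add_mem (Ideal.mul_mem_mul hfJ hαI) (Ideal.mul_mem_mul hgJ hβI)
  have hbase : quotDim (J * I) (d + n + n) ≤ 3 * D := by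
    have := quotDim_mul_le hvh hIst hkos hdn
    rwa [hd] at this
  have hlow : ∀ k, d + n + n ≤ k → 3 * D ≤ quotDim (J * I) k := by
    intro k hk
    obtain ⟨e, rfl⟩ : ∃ e, k = e + n + n := ⟨k - n - n, by omega⟩
    subst hfdef hgdef
    have := three_mul_quotDim_le hvh hIst hJI hf0' hrel (e := e) (by omega)
    rwa [hconst (e + n) (by omega)] at this
  have hconst2 : ∀ j, quotDim (J * I) (d + n + n + j) = 3 * D := by
    intro j
    refine le_antisymm ?_ (hlow _ (by omega))
    induction j with
    | zero => simpa using hbase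
    | succ j ih =>
      exact ((quotDim_succ (lin_isHomogeneous a b)
        (hsurj2 (d + n + n + j) (by omega))).1).trans ih
  -- Hence `ℓ` is a nonzerodivisor on `R/JI` in these degrees, and `w²` can be absorbed.
  have hcancel : ∀ m j, ∀ p : R3, p.IsHomogeneous (d + n + n + j) → ℓ ^ m * p ∈ J * I →
      p ∈ J * I := by
    intro m
    induction m with
    | zero => intro j p _ h; simpa using h
    | succ m ih =>
      intro j p hp h
      refine (quotDim_succ (lin_isHomogeneous a b) (hsurj2 (d + n + n + j) (by omega))).2 ?_ p hp ?_
      · rw [hconst2 j]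
        exact hconst2 (j + 1)
      · refine ih (j + 1) _ ?_ ?_
        · have := (lin_isHomogeneous a b).mul hp
          rwa [add_comm 1] at this
        · rw [pow_succ, mul_assoc] at h
          exact h
  have hpiece : idealPiece (I ^ 2) (d + n + n) = idealPiece (J * I) (d + n + n) := by
    ext p
    rw [mem_idealPiece, mem_idealPiece]
    refine ⟨fun ⟨hp, hpI⟩ => ⟨hp, ?_⟩, fun ⟨hp, hpI⟩ => ⟨hp, ?_⟩⟩
    · obtain ⟨q, hq, r, hpqr⟩ := mem_sq_span hpI
      have hcomp : p = homogeneousComponent (d + n + n) q + homogeneousComponent d r * w * w := by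
        rw [← hc_mul_add hw, ← hc_mul_add hw, ← map_add, ← hpqr, hc_self hp]
      rw [hcomp]
      refine add_mem (hJIst q hq _) (hcancel M 0 _ ?_ ?_)
      · exact ((homogeneousComponent_isHomogeneous d r).mul hw).mul hw
      · have h1 : ℓ ^ M * w * (homogeneousComponent d r * w) ∈ J * I :=
          Ideal.mul_mem_mul hℓM (I.mul_mem_left _ (Ideal.subset_span (by simp)))
        convert h1 using 1
        ring
    · rw [sq]
      exact Ideal.mul_mono_left hJI hpI
  have h1 := quotDim_add (I ^ 2) (d + n + n)
  have h2 := quotDim_add (J * I) (d + n + n)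
  rw [hpiece] at h1
  have h3 := hconst2 0
  rw [add_zero] at h3
  omega

theorem stmt3 (n d : ℕ) (x y z w : R3)
    -- d ∈ {n-2, n-1}
    (hdn : d + 1 = n ∨ d + 2 = n)
    -- BP1
    (hx : x.IsHomogeneous n) (hy : y.IsHomogeneous n)
    (hz : z.IsHomogeneous n) (hw : w.IsHomogeneous n)
    (hBP1 : LinearIndependent ℂ ![x, y, z, w])
    -- BP2
    (hBP2fin : (projVanish {x, y, z, w}).Finite)
    (hBP2lci : IsLCI (Ideal.span {x, y, z, w}))
    -- BP3: D is the eventual constant value of `dim (R/I)_k`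
    (D N : ℕ)
    (hD : ∀ k, N ≤ k → quotDim (Ideal.span {x, y, z, w}) k = D)
    (hBP3 : quotDim (Ideal.span {x, y, z, w}) (d + n) = D)
    -- BP4
    (hBP4 : w ∈ satSet (Ideal.span {x, y, z}))
    -- BP5
    (hBP5 : ∀ A B C : R3, A.IsHomogeneous d → B.IsHomogeneous d → C.IsHomogeneous d →
      A * x + B * y + C * z = 0 → A = 0 ∧ B = 0 ∧ C = 0) :
    quotDim (Ideal.span {x, y, z, w} ^ 2) (d + 2 * n) =
      3 * quotDim (Ideal.span {x, y, z, w}) (d + n) := by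
  have h := quotDim_sq (v := ![x, y, z]) hdn (by
    intro i
    fin_cases i
    exacts [hx, hy, hz]) hw hBP2fin hBP2lci hD hBP3 hBP4
  rw [hBP3, show d + 2 * n = d + n + n by ring]
  exact h
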